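/- arXiv:2105.05984 — 2 statements merged into one kernel-verified Lean document; each statement's English description precedes it below -/
import Mathlib

section
/- For every constant ε > 0 there exist a constant c > 0 and a threshold k₀ such that the following holds for all integers k ≥ k₀ and U with U ≥ k^{1+ε}: for every prime p > U and every integer m with 1 ≤ m ≤ U, there exist a set X ⊆ {0, …, U−1} of exactly k keys, a key x ∈ {0, …, U−1} with x ∉ X, and buckets a, b ∈ {0, …, m−1} such that, with h a random linear hash function with parameters p and m and y, z ∈ X chosen independently and uniformly at random (independently of h), Pr( h(y) = h(z) = b | h(x) = a ) ≥ (1/(m·k)) · exp( c · √( min( log k / log log k, log U / (log log U)² ) ) ). -/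
lemma pair_count (p m M g u v : ℕ) (hp : p.Prime) (hm : 1 ≤ m) (hM : 1 ≤ M) (hg : 0 < g)
    (hgp : g < p) (hu : u ≤ M) (hv : v ≤ M) :
    p * p ≤ (2 * m * M) * (2 * m) * ((Finset.range p ×ˢ Finset.range p).filter fun w =>
      ((w.1 * (g * u) + w.2) % p) % m = 0 ∧ ((w.1 * (g * v) + w.2) % p) % m = 0 ∧
      ((w.1 * 0 + w.2) % p) % m = 0).card := by
  have hp0 : 0 < p := hp.pos
  have hcop : Nat.Coprime g p :=
    Nat.Coprime.symm ((Nat.Prime.coprime_iff_not_dvd hp).2 (Nat.not_dvd_of_pos_of_lt hg hgp))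
  obtain ⟨e, he⟩ : ∃ e, g * e ≡ 1 [MOD p] := by
    obtain ⟨e, -, he⟩ := Nat.exists_mul_mod_eq_one_of_coprime hcop hp.one_lt
    exact ⟨e, by rw [Nat.ModEq, he, Nat.mod_eq_of_lt hp.one_lt]⟩
  set A := (p - 1) / (2 * m * M) + 1 with hA
  set B := (p - 1) / (2 * m) + 1 with hB
  have hD1 : 0 < 2 * m * M := by positivity
  have hD2 : 0 < 2 * m := by positivity
  have hA1 : p ≤ 2 * m * M * A := by
    have := Nat.lt_mul_div_succ (p - 1) hD1
    rw [hA]; omega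
  have hB1 : p ≤ 2 * m * B := by
    have := Nat.lt_mul_div_succ (p - 1) hD2
    rw [hB]; omega
  have key : A * B ≤ ((Finset.range p ×ˢ Finset.range p).filter fun w =>
      ((w.1 * (g * u) + w.2) % p) % m = 0 ∧ ((w.1 * (g * v) + w.2) % p) % m = 0 ∧
      ((w.1 * 0 + w.2) % p) % m = 0).card := by
    have hc : (Finset.range A ×ˢ Finset.range B).card = A * B := by simp
    rw [← hc]
    have ht : ∀ t, t < A → 2 * m * M * t < p := by
      intro t ht
      have h1 : t ≤ (p - 1) / (2 * m * M) := by omega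
      have h2 := (Nat.le_div_iff_mul_le hD1).1 h1
      rw [mul_comm]; omega
    have hi : ∀ t, t < B → 2 * m * t < p := by
      intro t ht
      have h1 : t ≤ (p - 1) / (2 * m) := by omega
      have h2 := (Nat.le_div_iff_mul_le hD2).1 h1
      rw [mul_comm]; omega
    have hσ : ∀ t, ((m * t * e) % p) * g ≡ m * t [MOD p] := by
      intro t
      calc ((m * t * e) % p) * g ≡ (m * t * e) * g [MOD p] := (Nat.mod_modEq _ _).mul_right _
        _ = m * t * (g * e) := by ring
        _ ≡ m * t * 1 [MOD p] := he.mul_left _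
        _ = m * t := by ring
    have hmain : ∀ t i u, t < A → i < B → u ≤ M →
        ((m * t * e) % p * (g * u) + m * i) % p = m * (t * u + i) := by
      intro t i u h1 h2 h3
      have h4 : (m * t * e) % p * (g * u) + m * i ≡ m * (t * u + i) [MOD p] := by
        calc (m * t * e) % p * (g * u) + m * i = ((m * t * e) % p * g) * u + m * i := by ring
          _ ≡ (m * t) * u + m * i [MOD p] := ((hσ t).mul_right _).add_right _
          _ = m * (t * u + i) := by ring
      have h5 : m * (t * u + i) < p := by
        have := ht t h1
        have := hi i h2
        have h6 : m * t * u ≤ m * t * M := Nat.mul_le_mul_left _ h3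
        nlinarith
      rw [h4, Nat.mod_eq_of_lt h5]
    apply Finset.card_le_card_of_injOn (fun w => ((m * w.1 * e) % p, m * w.2))
    · rintro ⟨t, i⟩ hw
      simp only [Finset.coe_product, Finset.coe_range, Set.mem_prod, Set.mem_Iio] at hw
      have h0 := hmain t i 0 hw.1 hw.2 (Nat.zero_le _)
      have h1 := hmain t i u hw.1 hw.2 hu
      have h2 := hmain t i v hw.1 hw.2 hv
      simp only [mul_zero, zero_add] at h0
      have := hi i hw.2
      simp only [Finset.coe_filter, Set.mem_ofPred_eq, Finset.mem_product, Finset.mem_range, mul_zero, zero_add]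
      refine ⟨⟨Nat.mod_lt _ hp0, by nlinarith⟩, ?_, ?_, ?_⟩
      · rw [h1]; simp
      · rw [h2]; simp
      · rw [h0]; simp
    · rintro ⟨t, i⟩ hw ⟨t', i'⟩ hw' h
      simp only [Finset.coe_product, Finset.coe_range, Set.mem_prod, Set.mem_Iio] at hw hw'
      simp only [Prod.mk.injEq] at h
      obtain ⟨ha, hb⟩ := h
      have hii : i = i' := Nat.eq_of_mul_eq_mul_left hm hb
      have h1 := hmain t i 1 hw.1 hw.2 hM
      have h2 := hmain t' i' 1 hw'.1 hw'.2 hM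
      rw [ha, hb, h2] at h1
      have := Nat.eq_of_mul_eq_mul_left hm h1
      simp only [Prod.mk.injEq]
      omega
  calc p * p ≤ (2 * m * M * A) * (2 * m * B) := Nat.mul_le_mul hA1 hB1
    _ = (2 * m * M) * (2 * m) * (A * B) := by ring
    _ ≤ _ := Nat.mul_le_mul_left _ key

lemma denom_count (p m : ℕ) (hm : 1 ≤ m) (hmp : m ≤ p) :
    m * ((Finset.range p ×ˢ Finset.range p).filter fun w : ℕ × ℕ =>
      ((w.1 * 0 + w.2) % p) % m = 0).card ≤ 2 * (p * p) := by
  have h : ((Finset.range p ×ˢ Finset.range p).filter fun w : ℕ × ℕ =>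
      ((w.1 * 0 + w.2) % p) % m = 0).card ≤ p * ((p - 1) / m + 1) := by
    have hc : (Finset.range p ×ˢ Finset.range ((p - 1) / m + 1)).card = p * ((p - 1) / m + 1) := by
      simp
    rw [← hc]
    apply Finset.card_le_card_of_injOn (fun w => (w.1, w.2 / m))
    · rintro ⟨s, t⟩ hw
      simp only [Finset.coe_filter, Set.mem_ofPred_eq, Finset.mem_product, Finset.mem_range] at hw
      simp only [Finset.coe_product, Finset.coe_range, Set.mem_prod, Set.mem_Iio]
      refine ⟨hw.1.1, Nat.lt_succ_of_le (Nat.div_le_div_right (by omega))⟩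
    · rintro ⟨s, t⟩ hw ⟨s', t'⟩ hw' h
      simp only [Finset.coe_filter, Set.mem_ofPred_eq, Finset.mem_product, Finset.mem_range,
        mul_zero, zero_add] at hw hw'
      rw [Nat.mod_eq_of_lt hw.1.2] at hw
      rw [Nat.mod_eq_of_lt hw'.1.2] at hw'
      simp only [Prod.mk.injEq] at h ⊢
      refine ⟨h.1, ?_⟩
      have h1 := Nat.div_add_mod t m
      have h2 := Nat.div_add_mod t' m
      rw [hw.2] at h1
      rw [hw'.2] at h2
      rw [← h1, ← h2, h.2]
  have h2 : m * ((p - 1) / m) ≤ p - 1 := Nat.mul_div_le _ _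
  calc _ ≤ m * (p * ((p - 1) / m + 1)) := Nat.mul_le_mul_left _ h
    _ = p * (m * ((p - 1) / m) + m) := by ring
    _ ≤ p * (2 * p) := Nat.mul_le_mul_left _ (by omega)
    _ = _ := by ring

lemma prob_bound (p m M k : ℕ) (hp : p.Prime) (hm : 1 ≤ m) (hmp : m ≤ p) (hM : 1 ≤ M)
    (X : Finset ℕ) (S : Finset (ℕ × ℕ)) (hS : S ⊆ X ×ˢ X)
    (hS2 : ∀ s ∈ S, ∃ g u v, 0 < g ∧ g < p ∧ u ≤ M ∧ v ≤ M ∧ s = (g * u, g * v)) :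
    (S.card : ℝ) / (8 * m * M * k ^ 2) ≤
      (((((Finset.range p ×ˢ Finset.range p) ×ˢ (X ×ˢ X)).filter fun w =>
            ((w.1.1 * w.2.1 + w.1.2) % p) % m = 0 ∧
            ((w.1.1 * w.2.2 + w.1.2) % p) % m = 0 ∧
            ((w.1.1 * 0 + w.1.2) % p) % m = 0).card : ℝ)
          / ((((Finset.range p ×ˢ Finset.range p).filter fun στ : ℕ × ℕ =>
                ((στ.1 * 0 + στ.2) % p) % m = 0).card : ℝ) * (k : ℝ) ^ 2)) := by
  have hden := denom_count p m hm hmp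
  have hpos : 0 < ((Finset.range p ×ˢ Finset.range p).filter fun στ : ℕ × ℕ =>
                ((στ.1 * 0 + στ.2) % p) % m = 0).card := by
    apply Finset.card_pos.2
    exact ⟨(0, 0), by simp [hp.pos]⟩
  set N := ((Finset.range p ×ˢ Finset.range p).filter fun στ : ℕ × ℕ =>
                ((στ.1 * 0 + στ.2) % p) % m = 0).card with hN
  set T := (((Finset.range p ×ˢ Finset.range p) ×ˢ (X ×ˢ X)).filter fun w =>
            ((w.1.1 * w.2.1 + w.1.2) % p) % m = 0 ∧
            ((w.1.1 * w.2.2 + w.1.2) % p) % m = 0 ∧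
            ((w.1.1 * 0 + w.1.2) % p) % m = 0) with hT
  have hTS : S.card * (p * p) ≤ (2 * m * M) * (2 * m) * T.card := by
    have h1 : ∑ s ∈ S, (T.filter fun w => w.2 = s).card ≤ T.card := by
      rw [← Finset.card_biUnion]
      · apply Finset.card_le_card
        intro w hw
        simp only [Finset.mem_biUnion, Finset.mem_filter] at hw
        obtain ⟨_, _, h, _⟩ := hw
        exact h
      · intro a _ b _ hab
        apply Finset.disjoint_left.2
        intro w h1 h2
        simp only [Finset.mem_filter] at h1 h2
        exact hab (h1.2.symm.trans h2.2)
    have h2 : ∀ s ∈ S, p * p ≤ (2 * m * M) * (2 * m) * (T.filter fun w => w.2 = s).card := by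
      intro s hs
      obtain ⟨g, u, v, hg, hgp, hu, hv, rfl⟩ := hS2 s hs
      refine (pair_count p m M g u v hp hm hM hg hgp hu hv).trans (Nat.mul_le_mul_left _ ?_)
      apply Finset.card_le_card_of_injOn (fun w => (w, (g * u, g * v)))
      · intro w hw
        simp only [Finset.coe_filter, Set.mem_ofPred_eq] at hw
        simp only [hT, Finset.coe_filter, Set.mem_ofPred_eq, Finset.mem_filter]
        refine ⟨⟨?_, hw.2⟩, trivial⟩
        exact Finset.mem_product.2 ⟨hw.1, hS hs⟩
      · intro a _ b _ h
        simpa using h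
    calc S.card * (p * p) = ∑ s ∈ S, p * p := by simp
      _ ≤ ∑ s ∈ S, (2 * m * M) * (2 * m) * (T.filter fun w => w.2 = s).card :=
        Finset.sum_le_sum h2
      _ = (2 * m * M) * (2 * m) * ∑ s ∈ S, (T.filter fun w => w.2 = s).card := by
        rw [Finset.mul_sum]
      _ ≤ _ := Nat.mul_le_mul_left _ h1
  have hpp : 0 < p * p := Nat.mul_pos hp.pos hp.pos
  have hfin : S.card * N ≤ (8 * m * M) * T.card := by
    have h3 : (S.card * N) * (m * (p * p)) ≤ (8 * m * M) * T.card * (m * (p * p)) := by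
      calc (S.card * N) * (m * (p * p)) = (S.card * (p * p)) * (m * N) := by ring
        _ ≤ ((2 * m * M) * (2 * m) * T.card) * (2 * (p * p)) := Nat.mul_le_mul hTS hden
        _ = _ := by ring
    exact Nat.le_of_mul_le_mul_right h3 (Nat.mul_pos hm hpp)
  rcases Nat.eq_zero_or_pos k with rfl | hk
  · simp
  have hmR : (0 : ℝ) < m := by exact_mod_cast hm
  have hMR : (0 : ℝ) < M := by exact_mod_cast hM
  have hkR : (0 : ℝ) < k := by exact_mod_cast hk
  have hNR : (0 : ℝ) < N := by exact_mod_cast hpos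
  have hfinR : (S.card : ℝ) * N ≤ (8 * m * M) * T.card := by exact_mod_cast hfin
  rw [div_le_div_iff₀ (by positivity) (by positivity)]
  nlinarith [mul_le_mul_of_nonneg_right hfinR (sq_nonneg (k : ℝ))]

noncomputable def keyf (R : ℕ) (i : ℕ) (A : Finset ℕ) : ℕ := (1 + i * primorial R) * ∏ q ∈ A, q

lemma dvd_keyf (R i q : ℕ) (A : Finset ℕ) (hq : q.Prime) (hqR : q ≤ R)
    (hA : ∀ q ∈ A, q.Prime) : q ∣ keyf R i A ↔ q ∈ A := by
  have hqP : q ∣ primorial R := by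
    unfold primorial
    apply Finset.dvd_prod_of_mem
    simp only [Finset.mem_filter, Finset.mem_range]
    exact ⟨by omega, hq⟩
  unfold keyf
  rw [hq.dvd_mul]
  constructor
  · rintro (h | h)
    · exfalso
      have h1 : q ∣ 1 := (Nat.dvd_add_left (Dvd.dvd.mul_left hqP i)).1 h
      exact hq.one_lt.ne' (Nat.dvd_one.1 h1)
    · obtain ⟨a, ha, hd⟩ := (hq.prime.dvd_finsetProd_iff _).1 h
      rwa [(Nat.prime_dvd_prime_iff_eq hq (hA a ha)).1 hd]
  · intro h
    exact Or.inr (Finset.dvd_prod_of_mem _ h)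

lemma keyf_inj (R i i' : ℕ) (A A' : Finset ℕ) (hA : ∀ q ∈ A, q.Prime ∧ q ≤ R)
    (hA' : ∀ q ∈ A', q.Prime ∧ q ≤ R) (h : keyf R i A = keyf R i' A') : i = i' ∧ A = A' := by
  have hAA : A = A' := by
    ext q
    constructor
    · intro hq
      have h1 := (dvd_keyf R i q A (hA q hq).1 (hA q hq).2 (fun q hq => (hA q hq).1)).2 hq
      rw [h] at h1
      exact (dvd_keyf R i' q A' (hA q hq).1 (hA q hq).2 (fun q hq => (hA' q hq).1)).1 h1
    · intro hq
      have h1 := (dvd_keyf R i' q A' (hA' q hq).1 (hA' q hq).2 (fun q hq => (hA' q hq).1)).2 hq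
      rw [← h] at h1
      exact (dvd_keyf R i q A (hA' q hq).1 (hA' q hq).2 (fun q hq => (hA q hq).1)).1 h1
  refine ⟨?_, hAA⟩
  subst hAA
  unfold keyf at h
  have hpos : 0 < ∏ q ∈ A, q := Finset.prod_pos fun q hq => (hA q hq).1.pos
  have h1 := Nat.eq_of_mul_eq_mul_right hpos h
  have h2 : i * primorial R = i' * primorial R := by omega
  exact Nat.eq_of_mul_eq_mul_right (primorial_pos R) h2

lemma set_rec (Q A B C : Finset ℕ) (hC : C ⊆ A) (hB : B ⊆ Q \ A) :
    A \ ((A \ C) ∪ B) = C ∧ ((A \ C) ∪ B) \ A = B := by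
  constructor
  · ext q
    have h6 := @hC q
    have h7 := @hB q
    simp only [Finset.mem_union, Finset.mem_sdiff] at h6 h7 ⊢
    tauto
  · ext q
    have h7 := @hB q
    simp only [Finset.mem_union, Finset.mem_sdiff] at h7 ⊢
    tauto

lemma comb (R r h j K : ℕ) (Q : Finset ℕ) (hQ : ∀ q ∈ Q, q.Prime ∧ q ≤ R) (hr : Q.card = r)
    (_hK : 1 ≤ K) (hjh : j ≤ h) :
    ∃ (X : Finset ℕ) (S : Finset (ℕ × ℕ)), X.card = K * r.choose h ∧
      (∀ y ∈ X, 0 < y ∧ y ≤ K * 16 ^ R) ∧ S ⊆ X ×ˢ X ∧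
      S.card = K * r.choose h * (h.choose j * (r - h).choose j) ∧
      ∀ s ∈ S, ∃ g u v, 0 < g ∧ g ≤ s.1 ∧ u ≤ R ^ j ∧ v ≤ R ^ j ∧ s = (g * u, g * v) := by
  classical
  set D := Finset.range K ×ˢ Finset.powersetCard h Q with hD
  have hDQ : ∀ w ∈ D, ∀ q ∈ w.2, q.Prime ∧ q ≤ R := by
    intro w hw q hq
    rw [hD, Finset.mem_product, Finset.mem_powersetCard] at hw
    exact hQ q (hw.2.1 hq)
  set E := D.sigma (fun w => Finset.powersetCard j w.2 ×ˢ Finset.powersetCard j (Q \ w.2)) with hE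
  have hEm : ∀ e ∈ E, e.1 ∈ D ∧ (e.1.1, (e.1.2 \ e.2.1) ∪ e.2.2) ∈ D ∧ e.2.1 ⊆ e.1.2 ∧ 
      e.2.2 ⊆ Q \ e.1.2 ∧ e.2.1.card = j ∧ e.2.2.card = j := by
    rintro ⟨⟨i, A⟩, ⟨C, B⟩⟩ he
    simp only [hE, hD, Finset.mem_sigma, Finset.mem_product, Finset.mem_powersetCard,
      Finset.mem_range] at he ⊢
    obtain ⟨⟨hi, hA, hAc⟩, ⟨hC, hCc⟩, hB, hBc⟩ := he
    refine ⟨⟨hi, hA, hAc⟩, ⟨hi, ?_, ?_⟩, hC, hB, hCc, hBc⟩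
    · exact Finset.union_subset (Finset.sdiff_subset.trans hA) (hB.trans Finset.sdiff_subset)
    · rw [Finset.card_union_of_disjoint, Finset.card_sdiff_of_subset hC, hAc, hCc, hBc]
      · omega
      · apply Finset.disjoint_left.2
        intro q h1 h2
        exact (Finset.mem_sdiff.1 (hB h2)).2 (Finset.mem_sdiff.1 h1).1
  have hinj : Set.InjOn (fun w : ℕ × Finset ℕ => keyf R w.1 w.2) D := by
    intro w hw w' hw' hh
    obtain ⟨h1, h2⟩ := keyf_inj R _ _ _ _ (hDQ w hw) (hDQ w' hw') hh
    exact Prod.ext h1 h2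
  refine ⟨D.image (fun w => keyf R w.1 w.2), E.image (fun e => (keyf R e.1.1 e.1.2,
    keyf R e.1.1 ((e.1.2 \ e.2.1) ∪ e.2.2))), ?_, ?_, ?_, ?_, ?_⟩
  · rw [Finset.card_image_of_injOn hinj, hD]
    simp [hr]
  · intro y hy
    obtain ⟨w, hw, rfl⟩ := Finset.mem_image.1 hy
    have hpos : 0 < ∏ q ∈ w.2, q := Finset.prod_pos fun q hq => (hDQ w hw q hq).1.pos
    have hle : ∏ q ∈ w.2, q ≤ primorial R := by
      unfold primorial
      apply Finset.prod_le_prod_of_subset_of_one_le'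
      · intro q hq
        have := hDQ w hw q hq
        simp only [Finset.mem_filter, Finset.mem_range]
        exact ⟨by omega, this.1⟩
      · intro q hq _
        exact (Finset.mem_filter.1 hq).2.one_lt.le
    have h4 := primorial_le_four_pow R
    have hPpos := primorial_pos R
    refine ⟨by unfold keyf; positivity, ?_⟩
    have hi : w.1 + 1 ≤ K := by
      rw [hD, Finset.mem_product, Finset.mem_range] at hw
      exact hw.1
    unfold keyf
    calc (1 + w.1 * primorial R) * ∏ q ∈ w.2, q
        ≤ ((w.1 + 1) * primorial R) * primorial R := Nat.mul_le_mul (by nlinarith) hle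
      _ ≤ (K * 4 ^ R) * 4 ^ R := Nat.mul_le_mul (Nat.mul_le_mul hi h4) h4
      _ = K * 16 ^ R := by rw [mul_assoc, ← mul_pow]; norm_num
  · intro s hs
    obtain ⟨e, he, rfl⟩ := Finset.mem_image.1 hs
    obtain ⟨h1, h2, -⟩ := hEm e he
    exact Finset.mem_product.2 ⟨Finset.mem_image.2 ⟨_, h1, rfl⟩, Finset.mem_image.2 ⟨_, h2, rfl⟩⟩
  · rw [Finset.card_image_of_injOn]
    · rw [hE, Finset.card_sigma]
      rw [Finset.sum_congr rfl (g := fun _ => h.choose j * (r - h).choose j)]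
      · simp [hD, hr]
      · intro w hw
        rw [hD, Finset.mem_product, Finset.mem_powersetCard] at hw
        rw [Finset.card_product, Finset.card_powersetCard, Finset.card_powersetCard, hw.2.2,
          Finset.card_sdiff_of_subset hw.2.1, hr, hw.2.2]
    · intro e he e' he' hh
      obtain ⟨h1, h2, h3, h4, -⟩ := hEm e he
      obtain ⟨h1', h2', h3', h4', -⟩ := hEm e' he'
      simp only [Prod.mk.injEq] at hh
      obtain ⟨ha, hb⟩ := keyf_inj R _ _ _ _ (hDQ _ h1) (hDQ _ h1') hh.1
      obtain ⟨-, hc⟩ := keyf_inj R _ _ _ _ (hDQ _ h2) (hDQ _ h2') hh.2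
      obtain ⟨⟨i, A⟩, ⟨C, B⟩⟩ := e
      obtain ⟨⟨i', A'⟩, ⟨C', B'⟩⟩ := e'
      dsimp only at *
      subst ha hb
      obtain ⟨r1, r2⟩ := set_rec Q A B C h3 h4
      obtain ⟨r1', r2'⟩ := set_rec Q A B' C' h3' h4'
      have hCC : C = C' := by rw [← r1, hc, r1']
      have hBB : B = B' := by rw [← r2, hc, r2']
      rw [hCC, hBB]
  · intro s hs
    obtain ⟨e, he, rfl⟩ := Finset.mem_image.1 hs
    obtain ⟨h1, h2, h3, h4, h5, h6⟩ := hEm e he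
    obtain ⟨⟨i, A⟩, ⟨C, B⟩⟩ := e
    dsimp only at *
    have hAq := hDQ _ h1
    have hBq := hDQ _ h2
    dsimp only at hAq hBq
    have hy : keyf R i A = keyf R i (A \ C) * ∏ q ∈ C, q := by
      unfold keyf
      rw [mul_assoc, Finset.prod_sdiff h3]
    have hz : keyf R i ((A \ C) ∪ B) = keyf R i (A \ C) * ∏ q ∈ B, q := by
      unfold keyf
      rw [mul_assoc, Finset.prod_union]
      apply Finset.disjoint_left.2
      intro q h1 h2
      exact (Finset.mem_sdiff.1 (h4 h2)).2 (Finset.mem_sdiff.1 h1).1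
    have hCpos : 0 < ∏ q ∈ C, q := Finset.prod_pos fun q hq => (hAq q (h3 hq)).1.pos
    refine ⟨keyf R i (A \ C), ∏ q ∈ C, q, ∏ q ∈ B, q, ?_, ?_, ?_, ?_, ?_⟩
    · have : 0 < ∏ q ∈ A \ C, q :=
        Finset.prod_pos fun q hq => (hAq q (Finset.mem_sdiff.1 hq).1).1.pos
      unfold keyf; positivity
    · rw [hy]; exact Nat.le_mul_of_pos_right _ hCpos
    · rw [← h5]; exact Finset.prod_le_pow_card _ _ _ fun q hq => (hAq q (h3 hq)).2
    · rw [← h6]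
      exact Finset.prod_le_pow_card _ _ _ fun q hq => (hBq q (Finset.mem_union_right _ hq)).2
    · rw [hy, hz]

/-- binomial bound -/
lemma choose_bound (h j s R : ℕ) (hR : R ≤ s * s) (hh : 4 * j * s ≤ h) (hs : 1 ≤ s) :
    4 ^ j * R ^ j ≤ h.choose j * h.choose j := by
  have h1 : (2 * s) ^ j ≤ h.choose j := by
    rcases Nat.eq_zero_or_pos j with rfl | hj
    · simp
    have h2 : h + 1 - j ≥ 2 * s * j := by
      have : j ≤ j * s := Nat.le_mul_of_pos_right _ hs
      have e1 : 2 * s * j = 2 * (j * s) := by ring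
      have e2 : 4 * j * s = 4 * (j * s) := by ring
      omega
    have h3 := Nat.pow_le_choose (α := ℝ) j h
    have h4 : ((2 * s : ℕ) : ℝ) ^ j ≤ ((h + 1 - j : ℕ) : ℝ) ^ j / (j.factorial : ℝ) := by
      rw [le_div_iff₀ (by exact_mod_cast Nat.factorial_pos j)]
      have h5 : (2 * s) ^ j * j.factorial ≤ (h + 1 - j) ^ j := by
        calc (2 * s) ^ j * j.factorial ≤ (2 * s) ^ j * j ^ j :=
              Nat.mul_le_mul_left _ (Nat.factorial_le_pow j)
          _ = (2 * s * j) ^ j := by rw [← mul_pow]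
          _ ≤ _ := Nat.pow_le_pow_left h2 j
      exact_mod_cast h5
    exact_mod_cast h4.trans h3
  calc 4 ^ j * R ^ j = (4 * R) ^ j := by rw [mul_pow]
    _ ≤ (2 * s * (2 * s)) ^ j := Nat.pow_le_pow_left (by nlinarith) j
    _ = (2 * s) ^ j * (2 * s) ^ j := by rw [mul_pow]
    _ ≤ _ := Nat.mul_le_mul h1 h1

lemma finite_part (k U p m R r j : ℕ) (hp : p.Prime) (hUp : U < p) (hm : 1 ≤ m) (hmU : m ≤ U)
    (hR : 1 ≤ R) (hr : r ≤ Nat.primeCounting R) (hrk : 2 ^ r ≤ k) (hkU : k * 16 ^ R < U)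
    (hj : 4 * j * (Nat.sqrt R + 1) ≤ r / 2) :
    ∃ X : Finset ℕ, X ⊆ Finset.range U ∧ X.card = k ∧ 0 ∉ X ∧
      1 / ((m : ℝ) * k) * ((4 : ℝ) ^ j / 16) ≤
      (((((Finset.range p ×ˢ Finset.range p) ×ˢ (X ×ˢ X)).filter fun w =>
            ((w.1.1 * w.2.1 + w.1.2) % p) % m = 0 ∧
            ((w.1.1 * w.2.2 + w.1.2) % p) % m = 0 ∧
            ((w.1.1 * 0 + w.1.2) % p) % m = 0).card : ℝ)
          / ((((Finset.range p ×ˢ Finset.range p).filter fun στ : ℕ × ℕ =>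
                ((στ.1 * 0 + στ.2) % p) % m = 0).card : ℝ) * (k : ℝ) ^ 2)) := by
  classical
  have hcardP : r ≤ (Nat.primesLE R).card := by
    rwa [Nat.primesLE_card_eq_primeCounting]
  obtain ⟨Q, hQ, hQr⟩ := Finset.exists_subset_card_eq hcardP
  have hQ' : ∀ q ∈ Q, q.Prime ∧ q ≤ R := by
    intro q hq
    have := hQ hq
    rw [Nat.mem_primesLE] at this
    exact ⟨this.2, this.1⟩
  set h := r / 2 with hh
  set C := r.choose h with hC
  have hCpos : 0 < C := Nat.choose_pos (by omega)
  have hCk : C ≤ k := (Nat.choose_le_two_pow r h).trans hrk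
  set K := k / C with hK
  have hK1 : 1 ≤ K := (Nat.one_le_div_iff hCpos).2 hCk
  have hjh : j ≤ h := by nlinarith
  obtain ⟨X0, S, hX0, hX0b, hS, hScard, hS2⟩ := comb R r h j K Q hQ' hQr hK1 hjh
  have hKk : K ≤ k := Nat.div_le_self _ _
  have hkU' : k < U := lt_of_le_of_lt (Nat.le_mul_of_pos_right _ (by positivity)) hkU
  have hX0U : ∀ y ∈ X0, 0 < y ∧ y < U := fun y hy =>
    ⟨(hX0b y hy).1, lt_of_le_of_lt ((hX0b y hy).2.trans (Nat.mul_le_mul_right _ hKk)) hkU⟩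
  have hsub : X0 ⊆ Finset.Ico 1 U := by
    intro y hy
    have := hX0U y hy
    rw [Finset.mem_Ico]; omega
  obtain ⟨X, hX1, hX2, hXk⟩ := Finset.exists_subsuperset_card_eq hsub
    (n := k) (by rw [hX0]; exact Nat.div_mul_le_self k C) (by simp; omega)
  refine ⟨X, ?_, hXk, ?_, ?_⟩
  · intro y hy
    have := Finset.mem_Ico.1 (hX2 hy)
    rw [Finset.mem_range]; omega
  · intro h0
    have := Finset.mem_Ico.1 (hX2 h0)
    omega
  refine le_trans ?_ (prob_bound p m (R ^ j) k hp hm (by omega) (Nat.one_le_pow _ _ hR) X S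
    (hS.trans (Finset.product_subset_product hX1 hX1)) ?_)
  · have h1 : k ≤ 2 * (K * C) := by
      have := Nat.lt_div_mul_add (a := k) hCpos
      rw [← hK] at this
      nlinarith
    have h2 : 4 ^ j * R ^ j ≤ h.choose j * (r - h).choose j := by
      refine (choose_bound h j (Nat.sqrt R + 1) R (Nat.lt_succ_sqrt R).le hj (by omega)).trans ?_
      exact Nat.mul_le_mul_left _ (Nat.choose_le_choose _ (by omega))
    have h3 : k * (4 ^ j * R ^ j) ≤ 2 * S.card := by
      rw [hScard]
      calc k * (4 ^ j * R ^ j) ≤ (2 * (K * C)) * (h.choose j * (r - h).choose j) :=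
            Nat.mul_le_mul h1 h2
        _ = _ := by ring
    have h3R : (k : ℝ) * (4 ^ j * R ^ j) ≤ 2 * S.card := by exact_mod_cast h3
    have hmR : (0 : ℝ) < m := by exact_mod_cast hm
    have hRR : (0 : ℝ) < R := by exact_mod_cast hR
    have hkR : (0 : ℝ) < k := by exact_mod_cast hCpos.trans_le hCk
    push_cast
    rw [le_div_iff₀ (by positivity)]
    have : 1 / ((m : ℝ) * k) * ((4 : ℝ) ^ j / 16) * (8 * m * (R : ℝ) ^ j * k ^ 2)
        = k * (4 ^ j * R ^ j) / 2 := by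
      field_simp
      ring
    rw [this]
    linarith
  · intro s hs
    obtain ⟨g, u, v, hg, hgs, hu, hv, hsuv⟩ := hS2 s hs
    have := hX0U s.1 (Finset.mem_product.1 (hS hs)).1
    exact ⟨g, u, v, hg, by omega, hu, hv, hsuv⟩

lemma pi_lower (R : ℕ) (hR : 16 ≤ R) :
    (R : ℝ) / (2 * Real.logb 2 R) ≤ Nat.primeCounting R := by
  have h := Chebyshev.pi_ge R
  refine le_trans ?_ h
  have hl2 : 0 < Real.log 2 := Real.log_pos (by norm_num)
  have hRR : (16 : ℝ) ≤ R := by exact_mod_cast hR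
  have hlR : 0 < Real.log R := Real.log_pos (by linarith)
  have h1 : Real.log (R + 1) ≤ R * Real.log 2 / 2 := by
    have h2 : (R + 1) * (R + 1) ≤ 2 ^ R := by
      clear h hRR hlR
      induction R, hR using Nat.le_induction with
      | base => norm_num
      | succ n hn ih => rw [pow_succ]; nlinarith
    have h3 : Real.log (((R : ℝ) + 1) * (R + 1)) ≤ Real.log (2 ^ R) := by
      apply Real.log_le_log (by positivity)
      exact_mod_cast h2
    rw [Real.log_mul (by positivity) (by positivity), Real.log_pow] at h3
    linarith
  rw [Real.logb, div_le_div_iff₀ (by positivity) hlR]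
  field_simp
  nlinarith

lemma growth (K0 : ℝ) : ∃ x0 : ℝ, ∀ x ≥ x0, K0 ≤ x / (Real.logb 2 x) ^ 2 := by
  have h := (Real.isLittleO_pow_log_id_atTop (n := 2))
  have hl2 : 0 < Real.log 2 := Real.log_pos (by norm_num)
  set η : ℝ := (Real.log 2) ^ 2 / (|K0| + 1) with hη
  have hηp : 0 < η := by positivity
  have h2 := h.bound hηp
  obtain ⟨x0, hx0⟩ := Filter.eventually_atTop.1 h2
  refine ⟨max x0 2, fun x hx => ?_⟩
  have hx1 : x0 ≤ x := (le_max_left _ _).trans hx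
  have hx2 : 2 ≤ x := (le_max_right _ _).trans hx
  have h3 := hx0 x hx1
  have hlx : 0 < Real.log x := Real.log_pos (by linarith)
  simp only [id, Real.norm_eq_abs] at h3
  rw [abs_of_nonneg (by positivity), abs_of_pos (by linarith : (0:ℝ) < x)] at h3
  rw [Real.logb, div_pow, le_div_iff₀ (by positivity)]
  have h4 : (|K0| + 1) * Real.log x ^ 2 ≤ Real.log 2 ^ 2 * x := by
    rw [hη, div_mul_eq_mul_div, le_div_iff₀ (by positivity)] at h3
    linarith
  rw [mul_div_assoc', div_le_iff₀ (by positivity)]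
  have := le_abs_self K0
  nlinarith [sq_nonneg (Real.log x)]

lemma choose_R (δ K0 : ℝ) (hδ : 0 < δ) (hδ1 : δ ≤ 1) : ∃ L0 : ℝ, 4 ≤ L0 ∧ ∀ L V : ℝ, L0 ≤ L →
    L ≤ V → K0 ≤ min (L / Real.logb 2 L) (V / (Real.logb 2 V) ^ 2) ∧
    ∃ R : ℕ, 16 ≤ R ∧ (R : ℝ) ≤ δ * V ∧ (R : ℝ) / (2 * Real.logb 2 R) ≤ L ∧
      δ / 8 * min (L / Real.logb 2 L) (V / (Real.logb 2 V) ^ 2) ≤ R / (Real.logb 2 R) ^ 2 := by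
  obtain ⟨x0, hx0⟩ := growth K0
  refine ⟨max (max x0 4) (100 / δ), (le_max_right _ _).trans (le_max_left _ _), ?_⟩
  intro L V hL hLV
  have hLx : x0 ≤ L := (le_max_left _ _).trans ((le_max_left _ _).trans hL)
  have hL4 : 4 ≤ L := (le_max_right _ _).trans ((le_max_left _ _).trans hL)
  have hLδ : 100 ≤ δ * L := by
    have := (le_max_right _ _).trans hL
    rw [div_le_iff₀ hδ] at this
    linarith
  have hL100 : 100 ≤ L := by nlinarith
  set ℓ := Real.logb 2 L with hℓ
  have hℓ1 : 1 ≤ ℓ := by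
    rw [hℓ, Real.le_logb_iff_rpow_le (by norm_num) (by linarith)]
    rw [Real.rpow_one]; linarith
  have hℓL : ℓ ≤ L := by
    rw [hℓ, Real.logb_le_iff_le_rpow (by norm_num) (by linarith)]
    have h1 : 1 + L * 1 ≤ (1 + 1 : ℝ) ^ L := one_add_mul_self_le_rpow_one_add (by norm_num) (by linarith)
    norm_num at h1
    linarith
  set W := Real.logb 2 V with hW
  have hW1 : 1 ≤ W := by
    rw [hW, Real.le_logb_iff_rpow_le (by norm_num) (by linarith)]
    rw [Real.rpow_one]; linarith
  constructor
  · apply le_min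
    · refine (hx0 L hLx).trans ?_
      apply div_le_div_of_nonneg_left (by linarith) (by linarith)
      nlinarith
    · exact hx0 V (by linarith)
  set B := min (L * ℓ) (δ * V) with hB
  have hB100 : 100 ≤ B := le_min (by nlinarith) (by nlinarith)
  have hfl : (⌊B⌋₊ : ℝ) ≤ B := Nat.floor_le (by linarith)
  have hfl2 : B < (⌊B⌋₊ : ℝ) + 1 := Nat.lt_floor_add_one B
  set R := ⌊B⌋₊ with hR
  have hR16' : (16 : ℝ) ≤ R := by linarith
  have hRB : B / 2 ≤ R := by linarith
  have hRL : (R : ℝ) ≤ L * ℓ := hfl.trans (min_le_left _ _)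
  have hRV : (R : ℝ) ≤ δ * V := hfl.trans (min_le_right _ _)
  set lr := Real.logb 2 R with hlr
  have hlr1 : 1 ≤ lr := by
    rw [hlr, Real.le_logb_iff_rpow_le (by norm_num) (by linarith)]
    rw [Real.rpow_one]; linarith
  have hlrℓ : lr ≤ 2 * ℓ := by
    have h1 : lr ≤ Real.logb 2 (L ^ 2) :=
      Real.logb_le_logb_of_le (by norm_num) (by linarith) (by nlinarith)
    rw [Real.logb_pow] at h1
    exact_mod_cast h1
  have hlrW : lr ≤ W := Real.logb_le_logb_of_le (by norm_num) (by linarith) (by nlinarith)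
  refine ⟨R, by exact_mod_cast hR16', hRV, ?_, ?_⟩
  · rw [div_le_iff₀ (by linarith)]
    rcases le_total L R with h | h
    · have : ℓ ≤ lr := Real.logb_le_logb_of_le (by norm_num) (by linarith) h
      nlinarith
    · nlinarith
  · set Mn := min (L / ℓ) (V / W ^ 2) with hMn
    have hMn1 : Mn * ℓ ≤ L := by
      rw [← le_div_iff₀ (by linarith)]; exact min_le_left _ _
    have hMn2 : Mn * W ^ 2 ≤ V := by
      rw [← le_div_iff₀ (by positivity)]; exact min_le_right _ _
    have hMn0 : 0 ≤ Mn := le_min (by positivity) (div_nonneg (by linarith) (by positivity))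
    rw [le_div_iff₀ (by positivity)]
    rcases min_choice (L * ℓ) (δ * V) with h | h
    · rw [← hB] at h
      have h1 : lr ^ 2 ≤ 4 * ℓ ^ 2 := by nlinarith
      have h2 : Mn * lr ^ 2 ≤ 4 * (L * ℓ) := by
        calc Mn * lr ^ 2 ≤ Mn * (4 * ℓ ^ 2) := mul_le_mul_of_nonneg_left h1 hMn0
          _ = 4 * ((Mn * ℓ) * ℓ) := by ring
          _ ≤ 4 * (L * ℓ) := by nlinarith
      have h3 : δ / 8 * Mn * lr ^ 2 ≤ 1 / 8 * (Mn * lr ^ 2) := by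
        have : 0 ≤ Mn * lr ^ 2 := by positivity
        nlinarith
      linarith
    · rw [← hB] at h
      have h1 : lr ^ 2 ≤ W ^ 2 := by nlinarith
      have h2 : Mn * lr ^ 2 ≤ V := (mul_le_mul_of_nonneg_left h1 hMn0).trans hMn2
      have h3 : δ / 8 * (Mn * lr ^ 2) ≤ δ / 8 * V := mul_le_mul_of_nonneg_left h2 (by positivity)
      nlinarith

lemma choose_j (R r : ℕ) (κ μ : ℝ) (hR : 16 ≤ R) (hr : (R : ℝ) / (2 * Real.logb 2 R) < r + 1)
    (hκ : 32 * κ * √μ ≤ √R / Real.logb 2 R) (h14 : 14 ≤ κ * √μ) :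
    Real.exp (κ / 2 * √μ) ≤ (4 : ℝ) ^ ((r / 2) / (4 * (Nat.sqrt R + 1))) / 16 := by
  set s := Nat.sqrt R + 1 with hs
  set j := (r / 2) / (4 * s) with hj
  have hR16 : (16 : ℝ) ≤ R := by exact_mod_cast hR
  have hsq : (4 : ℝ) ≤ √R := by
    apply Real.le_sqrt_of_sq_le; linarith
  have hsqsq : √(R : ℝ) * √R = R := Real.mul_self_sqrt (by linarith)
  have hlr : 0 < Real.logb 2 R := Real.logb_pos (by norm_num) (by linarith)
  have hsR : (s : ℝ) ≤ 2 * √R := by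
    have h1 : ((Nat.sqrt R : ℕ) : ℝ) ≤ √R := Real.nat_sqrt_le_real_sqrt
    rw [hs]; push_cast; linarith
  have h1 : (r / 2 : ℕ) < (j + 1) * (4 * s) := by
    have := Nat.lt_div_mul_add (a := r / 2) (b := 4 * s) (by omega)
    rw [← hj] at this
    nlinarith
  have h2 : (r : ℝ) ≤ 2 * ((j + 1) * (4 * s)) := by
    have : r ≤ 2 * ((j + 1) * (4 * s)) := by omega
    exact_mod_cast this
  have h3 : (r : ℝ) ≤ 16 * (j + 1) * √R := by
    have : (0 : ℝ) ≤ (j : ℝ) + 1 := by positivity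
    nlinarith
  have h4 : 16 * κ * √μ * √R ≤ (R : ℝ) / (2 * Real.logb 2 R) := by
    have e : (R : ℝ) / (2 * Real.logb 2 R) = √R / Real.logb 2 R * √R / 2 := by
      rw [div_mul_eq_mul_div, hsqsq]; field_simp
    rw [e]
    nlinarith
  have h5 : κ * √μ ≤ j + 2 := by
    have h6 : 16 * (κ * √μ) * √R ≤ 16 * (j + 2) * √R := by nlinarith
    have h7 := le_of_mul_le_mul_right h6 (by linarith)
    linarith
  have h6 : 2 ≤ j := by
    have : (2 : ℝ) ≤ j := by linarith
    exact_mod_cast this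
  obtain ⟨i, hi⟩ := Nat.exists_eq_add_of_le h6
  have h7 : κ / 2 * √μ ≤ i := by
    rw [hi] at h5; push_cast at h5; linarith
  rw [hi, pow_add]
  have h8 : Real.exp i ≤ 4 ^ i := by
    have : Real.exp i = Real.exp 1 ^ i := by rw [← Real.exp_nat_mul, mul_one]
    rw [this]
    exact pow_le_pow_left₀ (Real.exp_pos _).le (by linarith [Real.exp_one_lt_d9]) i
  have h9 := Real.exp_le_exp.2 h7
  norm_num
  linarith

lemma analytic (ε : ℝ) (hε : 0 < ε) : ∃ c : ℝ, 0 < c ∧ ∃ k₀ : ℕ, ∀ k : ℕ, k₀ ≤ k →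
    ∀ U : ℕ, (k : ℝ) ^ ((1 : ℝ) + ε) ≤ U → ∃ R r j : ℕ, 1 ≤ R ∧ r ≤ Nat.primeCounting R ∧
      2 ^ r ≤ k ∧ k * 16 ^ R < U ∧ 4 * j * (Nat.sqrt R + 1) ≤ r / 2 ∧
      Real.exp (c * Real.sqrt (min
          (Real.logb 2 k / Real.logb 2 (Real.logb 2 k))
          (Real.logb 2 U / (Real.logb 2 (Real.logb 2 U)) ^ 2))) ≤ (4 : ℝ) ^ j / 16 := by
  set δ := ε / (8 * (1 + ε)) with hδ
  have hδ0 : 0 < δ := by positivity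
  have hδ1 : δ ≤ 1 := by
    rw [hδ, div_le_one (by positivity)]; linarith
  set κ := √(δ / 8) / 32 with hκ
  have hκ0 : 0 < κ := by positivity
  obtain ⟨L0, hL04, hL0⟩ := choose_R δ ((14 / κ) ^ 2) hδ0 hδ1
  refine ⟨κ / 2, by positivity, ⌈(2 : ℝ) ^ L0⌉₊, ?_⟩
  intro k hk U hU
  have hkL0 : (2 : ℝ) ^ L0 ≤ k := (Nat.le_ceil _).trans (by exact_mod_cast hk)
  have hk0 : (0 : ℝ) < k := lt_of_lt_of_le (by positivity) hkL0
  have hU0 : (0 : ℝ) < U := lt_of_lt_of_le (by positivity) hU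
  set L := Real.logb 2 k with hL
  set V := Real.logb 2 U with hV
  have hL0L : L0 ≤ L := by
    rw [hL, Real.le_logb_iff_rpow_le (by norm_num) hk0]; exact hkL0
  have hLV : (1 + ε) * L ≤ V := by
    have := Real.logb_le_logb_of_le (b := 2) (by norm_num) (by positivity) hU
    rwa [Real.logb_rpow_eq_mul_logb_of_pos hk0] at this
  have hkk : (k : ℝ) = 2 ^ L := by rw [hL, Real.rpow_logb (by norm_num) (by norm_num) hk0]
  have hUU : (U : ℝ) = 2 ^ V := by rw [hV, Real.rpow_logb (by norm_num) (by norm_num) hU0]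
  obtain ⟨hK0, R, hR16, hRV, hRL, hRM⟩ := hL0 L V hL0L (by nlinarith)
  have hR16' : (16 : ℝ) ≤ R := by exact_mod_cast hR16
  have hlr : 0 < Real.logb 2 R := Real.logb_pos (by norm_num) (by linarith)
  set μ := min (L / Real.logb 2 L) (V / Real.logb 2 V ^ 2) with hμ
  set y := (R : ℝ) / (2 * Real.logb 2 R) with hy
  have hy0 : 0 ≤ y := by positivity
  refine ⟨R, ⌊y⌋₊, (⌊y⌋₊ / 2) / (4 * (Nat.sqrt R + 1)), by omega, ?_, ?_, ?_, ?_, ?_⟩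
  · have : ((⌊y⌋₊ : ℕ) : ℝ) ≤ Nat.primeCounting R := (Nat.floor_le hy0).trans (pi_lower R hR16)
    exact_mod_cast this
  · have h1 : ((⌊y⌋₊ : ℕ) : ℝ) ≤ L := (Nat.floor_le hy0).trans hRL
    have h2 : (2 : ℝ) ^ (⌊y⌋₊ : ℕ) ≤ k := by
      rw [hkk, ← Real.rpow_natCast]
      exact Real.rpow_le_rpow_of_exponent_le (by norm_num) h1
    exact_mod_cast h2
  · have h1 : L + 4 * R < V := by
      have h2 : 4 * δ * (1 + ε) = ε / 2 := by rw [hδ]; field_simp; norm_num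
      have hL4 : 4 ≤ L := by linarith
      have hVp : 0 < V := by nlinarith
      have h3 : (1 + ε) * (L + 4 * R) < (1 + ε) * V := by
        calc (1 + ε) * (L + 4 * R) ≤ V + 4 * (1 + ε) * (δ * V) := by nlinarith
          _ = V + (4 * δ * (1 + ε)) * V := by ring
          _ = V + ε / 2 * V := by rw [h2]
          _ < (1 + ε) * V := by nlinarith
      exact lt_of_mul_lt_mul_left h3 (by linarith)
    have h2 : (k : ℝ) * 16 ^ R < U := by
      have e : (16 : ℝ) ^ R = 2 ^ (4 * (R : ℝ)) := by
        rw [Real.rpow_mul (by norm_num), Real.rpow_natCast]; norm_num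
      rw [hkk, hUU, e, ← Real.rpow_add (by norm_num)]
      exact Real.rpow_lt_rpow_of_exponent_lt (by norm_num) h1
    exact_mod_cast h2
  · have := Nat.div_mul_le_self (⌊y⌋₊ / 2) (4 * (Nat.sqrt R + 1))
    calc _ = ⌊y⌋₊ / 2 / (4 * (Nat.sqrt R + 1)) * (4 * (Nat.sqrt R + 1)) := by ring
      _ ≤ _ := this
  · apply choose_j R ⌊y⌋₊ κ μ hR16 (Nat.lt_floor_add_one y)
    · have h1 : 32 * κ = √(δ / 8) := by rw [hκ]; ring
      have h2 : √(R : ℝ) / Real.logb 2 R = √(R / Real.logb 2 R ^ 2) := by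
        rw [Real.sqrt_div (by linarith), Real.sqrt_sq hlr.le]
      rw [h1, h2, ← Real.sqrt_mul (by positivity)]
      exact Real.sqrt_le_sqrt hRM
    · have h1 : 14 / κ ≤ √μ := Real.le_sqrt_of_sq_le hK0
      rw [div_le_iff₀ hκ0] at h1
      linarith

/-- Lower bound: Knudsen's bound is almost optimal. For every `ε > 0`
there are `c > 0` and `k₀` such that for all `k ≥ k₀` and `U ≥ k^{1+ε}`, every prime
`p > U` and every `1 ≤ m ≤ U`: there exist a set `X ⊆ [U]` of exactly `k` keys, a key
`x ∈ [U] \ X` and buckets `a, b ∈ [m]` such that, for a random linear hash function `h`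
with parameters `p, m` and `y, z ∈ X` uniform and independent,
`Pr(h(y) = h(z) = b ∣ h(x) = a) ≥ (1/(mk)) · exp(c·√(min(log k/log log k, log U/(log log U)²)))`. -/
theorem stmt_15 : ∀ ε : ℝ, 0 < ε → ∃ c : ℝ, 0 < c ∧ ∃ k₀ : ℕ, ∀ k : ℕ, k₀ ≤ k →
    ∀ U : ℕ, (k : ℝ) ^ ((1 : ℝ) + ε) ≤ U →
    ∀ p : ℕ, p.Prime → U < p → ∀ m : ℕ, 1 ≤ m → m ≤ U →
    ∃ X : Finset ℕ, X ⊆ Finset.range U ∧ X.card = k ∧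
    ∃ x : ℕ, x < U ∧ x ∉ X ∧ ∃ a b : ℕ, a < m ∧ b < m ∧
      1 / ((m : ℝ) * k) * Real.exp (c * Real.sqrt (min
          (Real.logb 2 k / Real.logb 2 (Real.logb 2 k))
          (Real.logb 2 U / (Real.logb 2 (Real.logb 2 U)) ^ 2)))
      ≤ (((((Finset.range p ×ˢ Finset.range p) ×ˢ (X ×ˢ X)).filter fun w =>
            ((w.1.1 * w.2.1 + w.1.2) % p) % m = b ∧
            ((w.1.1 * w.2.2 + w.1.2) % p) % m = b ∧
            ((w.1.1 * x + w.1.2) % p) % m = a).card : ℝ)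
          / ((((Finset.range p ×ˢ Finset.range p).filter fun στ =>
                ((στ.1 * x + στ.2) % p) % m = a).card : ℝ) * (k : ℝ) ^ 2)) := by
  intro ε hε
  obtain ⟨c, hc, k₀, hk₀⟩ := analytic ε hε
  refine ⟨c, hc, k₀, ?_⟩
  intro k hk U hU p hp hUp m hm hmU
  obtain ⟨R, r, j, hR, hr, hrk, hkU, hj, hexp⟩ := hk₀ k hk U hU
  obtain ⟨X, hXU, hXk, h0, hX⟩ := finite_part k U p m R r j hp hUp hm hmU hR hr hrk hkU hj
  refine ⟨X, hXU, hXk, 0, by omega, h0, 0, 0, by omega, by omega, ?_⟩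
  exact le_trans (mul_le_mul_of_nonneg_left hexp (by positivity)) hX
end

section
/- Let p be a prime, let y, z be integers with 1 ≤ y, z < p, and let T be a positive integer. Then the number of pairs (i, j) of integers with 1 ≤ i < T, 1 ≤ j < T, and i·z ≡ j·y (mod p) is at least ⌈ T / H(y/z) ⌉ − 1. -/
/-- The height of a nonzero rational `q = a/b` in lowest terms is `max |a| |b|`. -/
def ratHeight (q : ℚ) : ℕ := max q.num.natAbs q.den

/-- For a prime `p`, integers `1 ≤ y, z < p` and a positive integer `T`,
the number of pairs `(i, j)` with `1 ≤ i < T`, `1 ≤ j < T` and `i·z ≡ j·y (mod p)` is at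
least `⌈T / H(y/z)⌉ − 1`. -/
theorem stmt_17 (p : ℕ) (hp : p.Prime) (y z : ℕ) (hy1 : 1 ≤ y) (hyp : y < p)
    (hz1 : 1 ≤ z) (hzp : z < p) (T : ℕ) (hT : 0 < T) :
    (⌈(T : ℚ) / (ratHeight ((y : ℚ) / (z : ℚ)) : ℚ)⌉ - 1 : ℤ)
      ≤ (((Finset.Ico 1 T ×ˢ Finset.Ico 1 T).filter fun ij =>
            ij.1 * z ≡ ij.2 * y [MOD p]).card : ℤ) := by
  set q : ℚ := (y : ℚ) / (z : ℚ) with hq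
  have hy0 : (0 : ℚ) < y := by exact_mod_cast hy1
  have hz0 : (0 : ℚ) < z := by exact_mod_cast hz1
  have hqpos : 0 < q := div_pos hy0 hz0
  have hnum : 0 < q.num := Rat.num_pos.mpr hqpos
  obtain ⟨a, ha⟩ : ∃ a : ℕ, q.num = a := ⟨q.num.toNat, by omega⟩
  have ha0 : 0 < a := by omega
  obtain ⟨b, hb⟩ : ∃ b : ℕ, q.den = b := ⟨_, rfl⟩
  have hb0 : 0 < b := hb ▸ q.den_pos
  have hab : a * z = b * y := by
    have h := Rat.num_div_den q
    rw [ha, hb, hq] at h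
    have hb' : (0 : ℚ) < b := by exact_mod_cast hb0
    rw [div_eq_div_iff hb'.ne' hz0.ne'] at h
    have h2 : a * z = y * b := by exact_mod_cast h
    rw [h2, mul_comm]
  have hH : ratHeight q = max a b := by
    simp [ratHeight, ha, hb]
  rw [hH]
  generalize hM : max a b = M
  have haM : a ≤ M := hM ▸ le_max_left a b
  have hbM : b ≤ M := hM ▸ le_max_right a b
  have hM0 : 0 < M := lt_of_lt_of_le ha0 haM
  have hceil : ⌈(T : ℚ) / (M : ℚ)⌉ ≤ (((T - 1) / M : ℕ) : ℤ) + 1 := by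
    rw [Int.ceil_le, div_le_iff₀ (by exact_mod_cast hM0)]
    have h := Nat.lt_mul_div_succ (T - 1) hM0
    have h2 : T ≤ ((T - 1) / M + 1) * M := by
      rw [mul_comm]; omega
    exact_mod_cast h2
  have hcard : (T - 1) / M ≤ ((Finset.Ico 1 T ×ˢ Finset.Ico 1 T).filter fun ij =>
            ij.1 * z ≡ ij.2 * y [MOD p]).card := by
    have hc : (Finset.Icc 1 ((T - 1) / M)).card = (T - 1) / M := by simp
    rw [← hc]
    refine Finset.card_le_card_of_injOn (fun k => (k * a, k * b)) ?_ ?_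
    · intro k hk
      have hk' := Finset.mem_Icc.mp (Finset.mem_coe.mp hk)
      have h1 : k * M ≤ T - 1 := (Nat.le_div_iff_mul_le hM0).mp hk'.2
      have h2 : k * a ≤ k * M := Nat.mul_le_mul_left k haM
      have h3 : k * b ≤ k * M := Nat.mul_le_mul_left k hbM
      have h4 : 0 < k * a := Nat.mul_pos hk'.1 ha0
      have h5 : 0 < k * b := Nat.mul_pos hk'.1 hb0
      have h6 : k * a * z = k * b * y := by rw [mul_assoc, hab, mul_assoc]
      rw [Finset.mem_coe, Finset.mem_filter, Finset.mem_product, Finset.mem_Ico, Finset.mem_Ico]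
      refine ⟨⟨⟨h4, ?_⟩, ⟨h5, ?_⟩⟩, ?_⟩
      · show k * a < T
        omega
      · show k * b < T
        omega
      · show k * a * z ≡ k * b * y [MOD p]
        rw [h6]
    · intro k _ l _ h
      exact Nat.eq_of_mul_eq_mul_right ha0 (Prod.mk.inj h).1
  have hcard' : (((T - 1) / M : ℕ) : ℤ) ≤ _ := Int.ofNat_le.mpr hcard
  exact le_trans (by linarith) hcard'
end
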